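/- Quantitative reciprocity in a golden history: if at time t₁ the force carrier c belongs to the force set φ_{t₁}(x, a, y), then there exists a time t₂ with t₁ < t₂ ≤ t₁ + θ(c) + 1 such that c belongs to φ_{t₂}(y, a, x). (Quantitative refinement of Theorem 1: the reciprocal desire must occur within θ(c) + 1 time steps.) -/

import Mathlib

/-- A golden social state over persons `P`, goods `E`, force carriers `C`,
with maximum idle periods `θ`.  It consists of a golden power function `pow`
(whose values partition `C`), an idle function `idle` bounded by `θ`, and a
golden force function `force` with `force x a y ⊆ pow x a y`, such that any
carrier whose idle counter has reached its maximum must be exercised. -/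
structure GoldenState (P E C : Type*) (θ : C → ℕ) where
  pow : P → E → P → Set C
  idle : C → ℕ
  force : P → E → P → Set C
  pow_disjoint : ∀ x₁ a₁ y₁ x₂ a₂ y₂, (x₁, a₁, y₁) ≠ (x₂, a₂, y₂) →
    Disjoint (pow x₁ a₁ y₁) (pow x₂ a₂ y₂)
  pow_union : (⋃ x, ⋃ a, ⋃ y, pow x a y) = Set.univ
  idle_le : ∀ c, idle c ≤ θ c
  force_sub : ∀ x a y, force x a y ⊆ pow x a y
  force_of_max : ∀ c x a y, idle c = θ c → c ∈ pow x a y → c ∈ force x a y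

/-- The successor relation on golden social states: exercised carriers are
transferred to the reciprocal triple and their idle counters are reset;
unexercised carriers stay put and their idle counters increase. -/
def Successor {P E C : Type*} {θ : C → ℕ} (σ σ' : GoldenState P E C θ) : Prop :=
  (∀ x a y, σ'.pow x a y = (σ.pow x a y \ σ.force x a y) ∪ σ.force y a x) ∧
  (∀ c x a y, c ∈ σ.pow x a y →
    (c ∈ σ.force x a y → σ'.idle c = 0) ∧
    (c ∉ σ.force x a y → σ'.idle c = σ.idle c + 1))

/-- A golden history: an infinite sequence of golden social states, each a
successor of the previous one. -/
def GoldenHistory {P E C : Type*} {θ : C → ℕ} (σ : ℕ → GoldenState P E C θ) : Prop :=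
  ∀ t, Successor (σ t) (σ (t + 1))

/-!
A carrier exercised at `(x, a, y)` at time `t₁` passes to `(y, a, x)` with idle counter `0`. While
unexercised it stays there and its counter grows by one at each step, so the bound `θ c` on the
counter forces it to be exercised at `(y, a, x)` at time `t₁ + 1 + θ c` at the latest.
-/

section

variable {P E C : Type*} {θ : C → ℕ} {c : C} {x y : P} {a : E}

namespace Successor

variable {σ σ' : GoldenState P E C θ}

theorem mem_pow_swap (hσ : Successor σ σ') (hc : c ∈ σ.force x a y) : c ∈ σ'.pow y a x := by
  rw [hσ.1]
  exact Or.inr hc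

theorem mem_pow_of_notMem_force (hσ : Successor σ σ') (hpow : c ∈ σ.pow x a y)
    (hforce : c ∉ σ.force x a y) : c ∈ σ'.pow x a y := by
  rw [hσ.1]
  exact Or.inl ⟨hpow, hforce⟩

theorem idle_eq_zero (hσ : Successor σ σ') (hc : c ∈ σ.force x a y) : σ'.idle c = 0 :=
  (hσ.2 c x a y (σ.force_sub x a y hc)).1 hc

theorem idle_eq_add_one (hσ : Successor σ σ') (hpow : c ∈ σ.pow x a y)
    (hforce : c ∉ σ.force x a y) : σ'.idle c = σ.idle c + 1 :=
  (hσ.2 c x a y hpow).2 hforce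

end Successor

namespace GoldenHistory

variable {σ : ℕ → GoldenState P E C θ} {t : ℕ}

theorem mem_pow_and_idle_add_of_notMem_force (hist : GoldenHistory σ)
    (hpow : c ∈ (σ t).pow x a y) {n : ℕ} (hforce : ∀ k < n, c ∉ (σ (t + k)).force x a y) :
    c ∈ (σ (t + n)).pow x a y ∧ (σ (t + n)).idle c = (σ t).idle c + n := by
  induction n with
  | zero => exact ⟨hpow, rfl⟩
  | succ n ih =>
    obtain ⟨hpow_n, hidle_n⟩ := ih fun k hk => hforce k (hk.trans n.lt_succ_self)
    have hforce_n : c ∉ (σ (t + n)).force x a y := hforce n n.lt_succ_self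
    have hsucc : Successor (σ (t + n)) (σ (t + (n + 1))) := hist (t + n)
    refine ⟨hsucc.mem_pow_of_notMem_force hpow_n hforce_n, ?_⟩
    rw [hsucc.idle_eq_add_one hpow_n hforce_n, hidle_n, add_assoc]

theorem exists_mem_force_of_mem_pow (hist : GoldenHistory σ) (hpow : c ∈ (σ t).pow x a y) :
    ∃ k, (σ t).idle c + k ≤ θ c ∧ c ∈ (σ (t + k)).force x a y := by
  by_contra! hforce
  obtain ⟨n, hn⟩ := Nat.exists_eq_add_of_le ((σ t).idle_le c)
  obtain ⟨hpow_n, hidle_n⟩ :=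
    hist.mem_pow_and_idle_add_of_notMem_force hpow fun k (hk : k < n) => hforce k (by lia)
  exact hforce n hn.ge ((σ (t + n)).force_of_max c x a y (hidle_n.trans hn.symm) hpow_n)

end GoldenHistory

theorem golden_reciprocity_quantitative_general {σ : ℕ → GoldenState P E C θ}
    (hist : GoldenHistory σ) {t₁ : ℕ} (h : c ∈ (σ t₁).force x a y) :
    ∃ t₂, t₁ < t₂ ∧ t₂ ≤ t₁ + θ c + 1 ∧ c ∈ (σ t₂).force y a x := by
  have hpow : c ∈ (σ (t₁ + 1)).pow y a x := (hist t₁).mem_pow_swap h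
  have hidle : (σ (t₁ + 1)).idle c = 0 := (hist t₁).idle_eq_zero h
  obtain ⟨k, hk, hforce⟩ := hist.exists_mem_force_of_mem_pow hpow
  exact ⟨t₁ + 1 + k, by lia, by lia, hforce⟩

end

/-- Quantitative reciprocity: if at time `t₁` carrier `c` is in the force set
`φ_{t₁}(x, a, y)`, then there is a time `t₂` with `t₁ < t₂ ≤ t₁ + θ c + 1`
such that `c ∈ φ_{t₂}(y, a, x)`. -/
theorem golden_reciprocity_quantitative
    {P E C : Type*} [Fintype P] [Nonempty P] [Fintype E] [Nonempty E]
    [Fintype C] [Nonempty C] {θ : C → ℕ} (hθ : ∀ c, 1 ≤ θ c)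
    (σ : ℕ → GoldenState P E C θ) (hist : GoldenHistory σ)
    (t₁ : ℕ) (c : C) (x y : P) (a : E) (h : c ∈ (σ t₁).force x a y) :
    ∃ t₂, t₁ < t₂ ∧ t₂ ≤ t₁ + θ c + 1 ∧ c ∈ (σ t₂).force y a x :=
  golden_reciprocity_quantitative_general hist h
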